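/- arXiv:2605.23283 — 4 statements merged into one kernel-verified Lean document; each statement's English description precedes it below -/
import Mathlib

section
/- (Weighted Motzkin–Strauss) Let G be a finite simple graph on a nonempty vertex set V, and for each edge uv let c(uv) be the maximum size of a clique of G containing both u and v (so c(uv) ≥ 2). Let W(G) be the symmetric matrix with W(G)_{uv} = c(uv)/(c(uv) − 1) if uv ∈ E(G) and 0 otherwise. Then for every x : V → ℝ with x_v ≥ 0 for all v and ∑_v x_v = 1, one has xᵀ W(G) x ≤ 1, i.e., 2·∑_{uv ∈ E(G)} (c(uv)/(c(uv) − 1))·x_u x_v ≤ 1. -/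
open scoped Classical
open Finset Matrix

variable {V : Type*}

noncomputable def adjMx [Fintype V] (G : SimpleGraph V) : Matrix V V ℝ :=
  Matrix.of fun u v => if G.Adj u v then 1 else 0

noncomputable def degMx [Fintype V] [DecidableEq V] (G : SimpleGraph V) : Matrix V V ℝ :=
  Matrix.diagonal fun v => ∑ u, if G.Adj v u then (1 : ℝ) else 0

noncomputable def signlessLap [Fintype V] [DecidableEq V] (G : SimpleGraph V) : Matrix V V ℝ :=
  degMx G + adjMx G

lemma adjMx_isHermitian [Fintype V] (G : SimpleGraph V) : (adjMx G).IsHermitian := by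
  ext u v
  simp [adjMx, Matrix.conjTranspose_apply, SimpleGraph.adj_comm]

lemma signlessLap_isHermitian [Fintype V] [DecidableEq V] (G : SimpleGraph V) :
    (signlessLap G).IsHermitian :=
  (Matrix.isHermitian_diagonal _).add (adjMx_isHermitian G)

noncomputable def maxEig [Fintype V] [DecidableEq V] {A : Matrix V V ℝ}
    (hA : A.IsHermitian) : ℝ := ⨆ v, hA.eigenvalues v

noncomputable def qIndex [Fintype V] [DecidableEq V] (G : SimpleGraph V) : ℝ :=
  maxEig (signlessLap_isHermitian G)

noncomputable def lambda1 [Fintype V] [DecidableEq V] (G : SimpleGraph V) : ℝ :=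
  maxEig (adjMx_isHermitian G)

/-- Maximum size of a clique of `G` containing vertex `v`. -/
noncomputable def cliqueAt (G : SimpleGraph V) (v : V) : ℕ :=
  sSup {n | ∃ s : Finset V, G.IsNClique n s ∧ v ∈ s}

/-- Maximum size of a clique of `G` containing both `u` and `v`. -/
noncomputable def cliqueAtEdge (G : SimpleGraph V) (u v : V) : ℕ :=
  sSup {n | ∃ s : Finset V, G.IsNClique n s ∧ u ∈ s ∧ v ∈ s}

/-!
If `u` and `v` are non-adjacent, then `xᵀ W x` is affine along the line `x + t (e_u - e_v)`, so
moving all the weight of one of `u`, `v` onto the other, in the right direction, does not decrease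
it. Repeating this, the support of `x` becomes a clique, of size `k` say. On that clique
`c(uv) ≥ k`, so every weight is at most `k / (k - 1)`, and Cauchy–Schwarz gives
`∑_{u ≠ v} x_u x_v = (∑ x_v)² - ∑ x_v² ≤ (1 - 1 / k) (∑ x_v)²`.
-/

section OffDiagonalSums

variable {ι R : Type*} [CommRing R]

lemma sum_offDiag_mul_eq_sq_sum_sub_sum_sq (s : Finset ι) (x : ι → R) :
    ∑ p ∈ s.offDiag, x p.1 * x p.2 = (∑ i ∈ s, x i) ^ 2 - ∑ i ∈ s, x i ^ 2 := by
  rw [eq_sub_iff_add_eq, sq, sum_mul_sum, ← sum_product', ← s.diag_union_offDiag,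
    sum_union s.disjoint_diag_offDiag, sum_diag, add_comm]
  simp only [sq]

lemma card_mul_sum_offDiag_mul_le [LinearOrder R] [IsStrictOrderedRing R]
    (s : Finset ι) (x : ι → R) :
    #s * ∑ p ∈ s.offDiag, x p.1 * x p.2 ≤ (#s - 1) * (∑ i ∈ s, x i) ^ 2 := by
  rw [sum_offDiag_mul_eq_sq_sum_sub_sum_sq]
  linarith [sq_sum_le_card_mul_sum_sq (s := s) (f := x)]

-- For `#s = 1` the coefficient is the junk value `1 / 0 = 0`, harmless as the sum is then empty.
lemma card_div_mul_sum_offDiag_mul_le {𝕜 : Type*} [Field 𝕜] [LinearOrder 𝕜]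
    [IsStrictOrderedRing 𝕜] (s : Finset ι) (x : ι → 𝕜) :
    #s / (#s - 1) * ∑ p ∈ s.offDiag, x p.1 * x p.2 ≤ (∑ i ∈ s, x i) ^ 2 := by
  rcases le_or_gt #s 1 with hs | hs
  · have hempty : s.offDiag = ∅ := by
      rwa [← coe_eq_empty, coe_offDiag, Set.offDiag_eq_empty, ← card_le_one_iff_subsingleton]
    rw [hempty, sum_empty, mul_zero]
    positivity
  · have hs' : (0 : 𝕜) < #s - 1 := sub_pos.2 (mod_cast hs)
    rw [div_mul_eq_mul_div, div_le_iff₀' hs']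
    exact card_mul_sum_offDiag_mul_le s x

end OffDiagonalSums

section QuadraticForm

variable [Fintype V] {R : Type*} [CommSemiring R] {W : Matrix V V R}

lemma dotProduct_mulVec_eq_sum_offDiag (hdiag : ∀ v, W v v = 0)
    {s : Finset V} {x : V → R} (hxs : Function.support x ⊆ s) :
    x ⬝ᵥ W *ᵥ x = ∑ p ∈ s.offDiag, W p.1 p.2 * (x p.1 * x p.2) := by
  have hoff : ∀ v ∉ s, x v = 0 := fun v hv => Function.notMem_support.1 fun h => hv (hxs h)
  have hterm (u v : V) : x u * (W u v * x v) = W u v * (x u * x v) := mul_left_comm _ _ _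
  simp only [dotProduct, mulVec, mul_sum, hterm]
  rw [← sum_product']
  refine (sum_subset (subset_univ _) fun p _ hp => ?_).symm
  simp only [mem_offDiag, not_and_or, not_not] at hp
  rcases hp with hp | hp | hp <;> simp [hoff, hdiag, hp]

lemma dotProduct_mulVec_add_self (hW : W.IsSymm) (x d : V → R) :
    (x + d) ⬝ᵥ W *ᵥ (x + d) = x ⬝ᵥ W *ᵥ x + 2 * (d ⬝ᵥ W *ᵥ x) + d ⬝ᵥ W *ᵥ d := by
  have hcomm : x ⬝ᵥ W *ᵥ d = d ⬝ᵥ W *ᵥ x := by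
    rw [dotProduct_mulVec, ← mulVec_transpose, hW.eq, dotProduct_comm]
  rw [mulVec_add, add_dotProduct, dotProduct_add, dotProduct_add, hcomm]
  ring

lemma dotProduct_mulVec_le_sq_sum_of_le_card_div {𝕜 : Type*} [Field 𝕜] [LinearOrder 𝕜]
    [IsStrictOrderedRing 𝕜] {W : Matrix V V 𝕜} (hdiag : ∀ v, W v v = 0) {s : Finset V}
    (hoff : ∀ u ∈ s, ∀ v ∈ s, u ≠ v → W u v ≤ #s / (#s - 1))
    {x : V → 𝕜} (hx : 0 ≤ x) (hxs : Function.support x ⊆ s) :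
    x ⬝ᵥ W *ᵥ x ≤ (∑ v, x v) ^ 2 := by
  have hsum : ∑ v ∈ s, x v = ∑ v, x v :=
    sum_subset (subset_univ s) fun v _ hv => Function.notMem_support.1 fun h => hv (hxs h)
  calc x ⬝ᵥ W *ᵥ x = ∑ p ∈ s.offDiag, W p.1 p.2 * (x p.1 * x p.2) :=
        dotProduct_mulVec_eq_sum_offDiag hdiag hxs
    _ ≤ ∑ p ∈ s.offDiag, #s / (#s - 1) * (x p.1 * x p.2) := by
        refine sum_le_sum fun p hp => ?_
        obtain ⟨hu, hv, huv⟩ := mem_offDiag.1 hp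
        exact mul_le_mul_of_nonneg_right (hoff _ hu _ hv huv) (mul_nonneg (hx _) (hx _))
    _ = #s / (#s - 1) * ∑ p ∈ s.offDiag, x p.1 * x p.2 := (mul_sum _ _ _).symm
    _ ≤ (∑ v, x v) ^ 2 := hsum ▸ card_div_mul_sum_offDiag_mul_le s x

end QuadraticForm

section TransferWeight

variable {M : Type*} [AddCommGroup M] [DecidableEq V]

/-- The weight vector obtained from `x` by moving all the weight of `v` onto `u`. It is written
as a translate of `x` so that a quadratic form can be expanded along the displacement. -/
def transferWeight (x : V → M) (u v : V) : V → M :=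
  x + (Pi.single u (x v) - Pi.single v (x v))

variable {x : V → M} {u v : V}

lemma transferWeight_apply_of_ne_of_ne {w : V} (hu : w ≠ u) (hv : w ≠ v) :
    transferWeight x u v w = x w := by
  simp [transferWeight, hu, hv]

lemma transferWeight_apply_left (h : u ≠ v) : transferWeight x u v u = x u + x v := by
  simp [transferWeight, h]

lemma transferWeight_apply_right (h : u ≠ v) : transferWeight x u v v = 0 := by
  simp [transferWeight, h.symm]

lemma transferWeight_nonneg [PartialOrder M] [IsOrderedAddMonoid M] (hx : 0 ≤ x) (h : u ≠ v) :
    0 ≤ transferWeight x u v := by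
  intro w
  rw [Pi.zero_apply]
  by_cases hv : w = v
  · rw [hv, transferWeight_apply_right h]
  by_cases hu : w = u
  · rw [hu, transferWeight_apply_left h]
    exact add_nonneg (hx u) (hx v)
  · rw [transferWeight_apply_of_ne_of_ne hu hv]
    exact hx w

lemma support_transferWeight_ssubset (hu : x u ≠ 0) (hv : x v ≠ 0) (h : u ≠ v) :
    Function.support (transferWeight x u v) ⊂ Function.support x := by
  refine ⟨fun w hw => ?_, fun hsub => hsub hv (transferWeight_apply_right h)⟩
  by_cases hwu : w = u
  · rwa [hwu]
  have hwv : w ≠ v := by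
    rintro rfl
    exact hw (transferWeight_apply_right h)
  rwa [Function.mem_support, transferWeight_apply_of_ne_of_ne hwu hwv] at hw

lemma sum_transferWeight [Fintype V] : ∑ w, transferWeight x u v w = ∑ w, x w := by
  simp [transferWeight, sum_add_distrib]

lemma transferWeight_dotProduct_mulVec [Fintype V] {R : Type*} [CommRing R] {W : Matrix V V R}
    (hW : W.IsSymm) {x : V → R} (huu : W u u = 0) (hvv : W v v = 0) (huv : W u v = 0) :
    transferWeight x u v ⬝ᵥ W *ᵥ transferWeight x u v =
      x ⬝ᵥ W *ᵥ x + 2 * x v * ((W *ᵥ x) u - (W *ᵥ x) v) := by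
  have hvu : W v u = 0 := (hW.apply u v).trans huv
  have hlinear : (Pi.single u (x v) - Pi.single v (x v)) ⬝ᵥ W *ᵥ x =
      x v * ((W *ᵥ x) u - (W *ᵥ x) v) := by
    rw [sub_dotProduct, single_dotProduct, single_dotProduct, mul_sub]
  have hquadratic : (Pi.single u (x v) - Pi.single v (x v)) ⬝ᵥ
      W *ᵥ (Pi.single u (x v) - Pi.single v (x v)) = 0 := by
    simp [mulVec_sub, sub_dotProduct, huu, hvv, huv, hvu]
  rw [transferWeight, dotProduct_mulVec_add_self hW, hlinear, hquadratic]
  ring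

end TransferWeight

section CliqueSupport

variable [Fintype V] {R : Type*} [CommRing R] [LinearOrder R] [IsStrictOrderedRing R]
  {G : SimpleGraph V} {W : Matrix V V R}

lemma exists_support_ssubset_of_not_isClique (hW : W.IsSymm)
    (hadj : ∀ u v, ¬ G.Adj u v → W u v = 0) {x : V → R} (hx : 0 ≤ x)
    (hclique : ¬ G.IsClique (Function.support x)) :
    ∃ y : V → R, 0 ≤ y ∧ ∑ v, y v = ∑ v, x v ∧
      Function.support y ⊂ Function.support x ∧ x ⬝ᵥ W *ᵥ x ≤ y ⬝ᵥ W *ᵥ y := by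
  obtain ⟨u, hu, v, hv, hne, huv⟩ : ∃ u ∈ Function.support x, ∃ v ∈ Function.support x,
      u ≠ v ∧ ¬ G.Adj u v := by
    simpa only [SimpleGraph.IsClique, Set.Pairwise, not_forall, exists_prop] using hclique
  wlog hle : (W *ᵥ x) v ≤ (W *ᵥ x) u generalizing u v
  · exact this v hv u hu hne.symm (mt SimpleGraph.Adj.symm huv) (le_of_not_ge hle)
  refine ⟨transferWeight x u v, transferWeight_nonneg hx hne, sum_transferWeight,
    support_transferWeight_ssubset hu hv hne, ?_⟩
  rw [transferWeight_dotProduct_mulVec hW (hadj u u G.irrefl) (hadj v v G.irrefl)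
    (hadj u v huv)]
  exact le_add_of_nonneg_right
    (mul_nonneg (mul_nonneg zero_le_two (hx v)) (sub_nonneg.2 hle))

lemma exists_isClique_support_dotProduct_mulVec_le (hW : W.IsSymm)
    (hadj : ∀ u v, ¬ G.Adj u v → W u v = 0) {x : V → R} (hx : 0 ≤ x) :
    ∃ y : V → R, 0 ≤ y ∧ ∑ v, y v = ∑ v, x v ∧
      G.IsClique (Function.support y) ∧ x ⬝ᵥ W *ᵥ x ≤ y ⬝ᵥ W *ᵥ y := by
  induction hs : Function.support x using WellFoundedLT.induction generalizing x with
  | ind s ih =>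
    subst hs
    by_cases hclique : G.IsClique (Function.support x)
    · exact ⟨x, hx, rfl, hclique, le_rfl⟩
    obtain ⟨y, hy, hyx, hsupp, hxy⟩ :=
      exists_support_ssubset_of_not_isClique hW hadj hx hclique
    obtain ⟨z, hz, hzy, hzclique, hyz⟩ := ih _ hsupp hy rfl
    exact ⟨z, hz, hzy.trans hyx, hzclique, hxy.trans hyz⟩

end CliqueSupport

section CliqueWeights

variable (G : SimpleGraph V)

lemma cliqueAtEdge_comm (u v : V) : cliqueAtEdge G u v = cliqueAtEdge G v u := by
  simp only [cliqueAtEdge, and_comm (a := u ∈ _)]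

variable {G}

lemma card_le_cliqueAtEdge [Finite V] {s : Finset V} (hs : G.IsClique s) {u v : V}
    (hu : u ∈ s) (hv : v ∈ s) : #s ≤ cliqueAtEdge G u v := by
  have := Fintype.ofFinite V
  refine le_csSup ⟨Fintype.card V, ?_⟩ ⟨s, ⟨hs, rfl⟩, hu, hv⟩
  rintro n ⟨t, ht, -, -⟩
  exact ht.card_eq ▸ t.card_le_univ

variable {𝕜 : Type*} [Field 𝕜] [LinearOrder 𝕜] [IsStrictOrderedRing 𝕜]

lemma div_sub_one_le_div_sub_one {a b : 𝕜} (ha : 1 < a) (hab : a ≤ b) :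
    b / (b - 1) ≤ a / (a - 1) := by
  rw [div_le_div_iff₀ (sub_pos.2 (ha.trans_le hab)) (sub_pos.2 ha)]
  linarith

lemma cliqueAtEdge_div_sub_one_le [Finite V] {s : Finset V} (hs : G.IsClique s) {u v : V}
    (hu : u ∈ s) (hv : v ∈ s) (huv : u ≠ v) :
    (cliqueAtEdge G u v : 𝕜) / (cliqueAtEdge G u v - 1) ≤ #s / (#s - 1) :=
  div_sub_one_le_div_sub_one (mod_cast one_lt_card.2 ⟨u, hu, v, hv, huv⟩)
    (mod_cast card_le_cliqueAtEdge hs hu hv)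

end CliqueWeights

theorem stmt8_general [Fintype V] {𝕜 : Type*} [Field 𝕜] [LinearOrder 𝕜]
    [IsStrictOrderedRing 𝕜] (G : SimpleGraph V) (W : Matrix V V 𝕜)
    (hW : ∀ u v, W u v =
      if G.Adj u v then (cliqueAtEdge G u v : 𝕜) / ((cliqueAtEdge G u v : 𝕜) - 1) else 0)
    (x : V → 𝕜) (hx : ∀ v, 0 ≤ x v) :
    x ⬝ᵥ W *ᵥ x ≤ (∑ v, x v) ^ 2 := by
  have hsymm : W.IsSymm := IsSymm.ext fun u v => by
    simp only [hW, cliqueAtEdge_comm G v u, G.adj_comm v u]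
  have hadj (u v : V) (huv : ¬ G.Adj u v) : W u v = 0 := by rw [hW, if_neg huv]
  obtain ⟨y, hy, hyx, hclique, hxy⟩ :=
    exists_isClique_support_dotProduct_mulVec_le hsymm hadj hx
  rw [← hyx]
  rw [← Set.coe_toFinset (Function.support y)] at hclique
  refine hxy.trans (dotProduct_mulVec_le_sq_sum_of_le_card_div (fun v => hadj v v G.irrefl)
    (fun u hu v hv huv => ?_) hy (Set.coe_toFinset _).ge)
  rw [hW, if_pos (hclique hu hv huv)]
  exact cliqueAtEdge_div_sub_one_le hclique hu hv huv

/-- **Weighted Motzkin–Strauss.** With weights `W_{uv} = c(uv)/(c(uv) - 1)` on edges,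
for any `x ≥ 0` with `∑ x_v = 1` we have `xᵀ W x ≤ 1`. -/
theorem stmt8 {V : Type*} [Fintype V] [DecidableEq V] [Nonempty V]
    (G : SimpleGraph V) (W : Matrix V V ℝ)
    (hW : ∀ u v, W u v =
      if G.Adj u v then (cliqueAtEdge G u v : ℝ) / ((cliqueAtEdge G u v : ℝ) - 1) else 0)
    (x : V → ℝ) (hx : ∀ v, 0 ≤ x v) (hsum : ∑ v, x v = 1) :
    x ⬝ᵥ W.mulVec x ≤ 1 := by
  simpa only [hsum, one_pow] using stmt8_general G W hW x hx
end

section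
/- Let G be a finite simple connected graph on at least 2 vertices, let q = q(G), and let x : V → ℝ be a vector with x_v > 0 for all v satisfying Q(G)x = q·x and ∑_{v} x_v = 1. Define the symmetric matrix M by M_{uv} = (x_u + x_v)/(2√(x_u x_v)) if uv ∈ E(G) and M_{uv} = 0 otherwise, and set y_v = √(x_v). Then M y = (q/2)·y, ∑_v y_v² = 1, and q/2 equals the largest eigenvalue of M. -/
open scoped Classical
open Finset

variable {V : Type*}

/-!
With `S = diag(√x)`, the matrix `M` is the average of the similar matrices `S A S⁻¹` and `S⁻¹ A S`,
and `S 𝟙 = y`, `S y = x`. Hence `2 S M y = S² A 𝟙 + A x = D x + A x = Q x = q x`, which is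
`M y = (q / 2) y`. As `M` is entrywise nonnegative and `y` is positive, comparing any eigenvector
`z` with `y` at a vertex maximizing `|z v| / y v` bounds its eigenvalue by `q / 2`.
-/

open Matrix Module.End

section NonnegativeMatrix

variable {n K : Type*} [Fintype n] [Field K] [LinearOrder K] [IsStrictOrderedRing K]
  {A : Matrix n n K} {y : n → K} {r : K}

lemma abs_eigenvalue_le_of_mulVec_le_smul (hA : ∀ i j, 0 ≤ A i j) (hy : ∀ i, 0 < y i)
    (hAy : A *ᵥ y ≤ r • y) {μ : K} {z : n → K} (hz : z ≠ 0) (hAz : A *ᵥ z = μ • z) :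
    |μ| ≤ r := by
  obtain ⟨k, hk⟩ := Function.ne_iff.mp hz
  have : Nonempty n := ⟨k⟩
  obtain ⟨i, hi⟩ := Finite.exists_max fun j => |z j| / y j
  set t := |z i| / y i
  have hzt : ∀ j, |z j| ≤ t * y j := fun j => (div_le_iff₀ (hy j)).mp (hi j)
  have hti : t * y i = |z i| := div_mul_cancel₀ _ (hy i).ne'
  have htpos : 0 < t := (div_pos (abs_pos.mpr hk) (hy k)).trans_le (hi k)
  have hzi : 0 < |z i| := hti ▸ mul_pos htpos (hy i)
  refine le_of_mul_le_mul_right ?_ hzi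
  calc |μ| * |z i| = |(A *ᵥ z) i| := by rw [hAz, Pi.smul_apply, smul_eq_mul, abs_mul]
    _ ≤ ∑ j, |A i j * z j| := abs_sum_le_sum_abs _ _
    _ = ∑ j, A i j * |z j| := by simp only [abs_mul, abs_of_nonneg (hA i _)]
    _ ≤ ∑ j, A i j * (t * y j) :=
        sum_le_sum fun j _ => mul_le_mul_of_nonneg_left (hzt j) (hA i j)
    _ = t * (A *ᵥ y) i := by simp only [mulVec, dotProduct, mul_sum, mul_left_comm]
    _ ≤ t * (r * y i) := mul_le_mul_of_nonneg_left (hAy i) htpos.le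
    _ = r * |z i| := by rw [mul_left_comm, hti]

lemma isGreatest_spectrum_of_pos_eigenvector [DecidableEq n] [Nonempty n]
    (hA : ∀ i j, 0 ≤ A i j) (hy : ∀ i, 0 < y i) (hAy : A *ᵥ y = r • y) :
    IsGreatest (spectrum K A) r := by
  rw [← spectrum_toLin']
  constructor
  · have hy0 : y ≠ 0 := fun h => (hy (Classical.arbitrary n)).ne' (congrFun h _)
    have hev : HasEigenvector (toLin' A) r y := hasEigenvector_iff.mpr
      ⟨mem_eigenspace_iff.mpr (by rwa [toLin'_apply]), hy0⟩
    exact (hasEigenvalue_of_hasEigenvector hev).mem_spectrum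
  · intro μ hμ
    obtain ⟨z, hz⟩ := (hasEigenvalue_iff_mem_spectrum.mpr hμ).exists_hasEigenvector
    have hAz : A *ᵥ z = μ • z := by rw [← toLin'_apply, hz.apply_eq_smul]
    exact (le_abs_self μ).trans (abs_eigenvalue_le_of_mulVec_le_smul hA hy hAy.le hz.2 hAz)

end NonnegativeMatrix

section SignlessLaplacian

variable [Fintype V] [DecidableEq V]

lemma isGreatest_spectrum_maxEig [Nonempty V] {A : Matrix V V ℝ} (hA : A.IsHermitian) :
    IsGreatest (spectrum ℝ A) (maxEig hA) := by
  rw [hA.spectrum_real_eq_range_eigenvalues]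
  exact ⟨exists_eq_ciSup_of_finite,
    Set.forall_mem_range.mpr (le_ciSup (Set.finite_range _).bddAbove)⟩

lemma signlessLap_mulVec_apply (G : SimpleGraph V) (x : V → ℝ) (u : V) :
    (signlessLap G *ᵥ x) u = ∑ v with G.Adj u v, (x u + x v) := by
  have hdeg : (degMx G *ᵥ x) u = ∑ v with G.Adj u v, x u := by
    simp only [degMx, mulVec_diagonal, sum_mul, ite_mul, one_mul, zero_mul, sum_filter]
  have hadj : (adjMx G *ᵥ x) u = ∑ v with G.Adj u v, x v := by
    simp only [adjMx, mulVec, dotProduct, of_apply, ite_mul, one_mul, zero_mul, sum_filter]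
  rw [signlessLap, add_mulVec, Pi.add_apply, hdeg, hadj, sum_add_distrib]

end SignlessLaplacian

/-- The matrix `M` of `stmt9`: the adjacency matrix of `G` in which an edge `uv` is weighted by the
ratio of the arithmetic to the geometric mean of `x u` and `x v`. -/
noncomputable def meanRatioMx (G : SimpleGraph V) (x : V → ℝ) : Matrix V V ℝ :=
  Matrix.of fun u v => if G.Adj u v then (x u + x v) / (2 * √(x u * x v)) else 0

section MeanRatio

variable (G : SimpleGraph V) {x : V → ℝ}

lemma meanRatioMx_nonneg (hx : ∀ v, 0 ≤ x v) (u v : V) : 0 ≤ meanRatioMx G x u v := by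
  rw [meanRatioMx, of_apply]
  split_ifs
  · exact div_nonneg (add_nonneg (hx u) (hx v)) (by positivity)
  · rfl

variable [Fintype V] [DecidableEq V]

lemma meanRatioMx_mulVec_sqrt_apply (hx : ∀ v, 0 < x v) (u : V) :
    (meanRatioMx G x *ᵥ fun v => √(x v)) u = (signlessLap G *ᵥ x) u / (2 * √(x u)) := by
  have hedge : ∀ v, (x u + x v) / (2 * √(x u * x v)) * √(x v) = (x u + x v) / (2 * √(x u)) := by
    intro v
    have hv : √(x v) ≠ 0 := (Real.sqrt_pos.mpr (hx v)).ne'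
    rw [Real.sqrt_mul (hx u).le, ← mul_assoc, ← div_div, div_mul_cancel₀ _ hv]
  rw [signlessLap_mulVec_apply, sum_div, sum_filter]
  simp only [meanRatioMx, mulVec, dotProduct, of_apply, ite_mul, zero_mul, hedge]

lemma meanRatioMx_mulVec_sqrt (hx : ∀ v, 0 < x v) {q : ℝ}
    (hq : signlessLap G *ᵥ x = q • x) :
    (meanRatioMx G x *ᵥ fun v => √(x v)) = (q / 2) • fun v => √(x v) := by
  ext u
  rw [meanRatioMx_mulVec_sqrt_apply G hx, hq]
  calc q * x u / (2 * √(x u)) = q / 2 * (x u / √(x u)) := mul_div_mul_comm ..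
    _ = q / 2 * √(x u) := by rw [Real.div_sqrt]

end MeanRatio

theorem stmt9_general [Fintype V] [DecidableEq V] [Nonempty V]
    (G : SimpleGraph V) {x : V → ℝ} (hx : ∀ v, 0 < x v) {q : ℝ}
    (heig : signlessLap G *ᵥ x = q • x) {M : Matrix V V ℝ}
    (hM : ∀ u v, M u v = if G.Adj u v then (x u + x v) / (2 * √(x u * x v)) else 0)
    (hMh : M.IsHermitian) {y : V → ℝ} (hy : ∀ v, y v = √(x v)) :
    M *ᵥ y = (q / 2) • y ∧ ∑ v, y v ^ 2 = ∑ v, x v ∧ maxEig hMh = q / 2 := by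
  obtain rfl : M = meanRatioMx G x := Matrix.ext hM
  obtain rfl : y = fun v => √(x v) := funext hy
  have hMy := meanRatioMx_mulVec_sqrt G hx heig
  refine ⟨hMy, sum_congr rfl fun v _ => Real.sq_sqrt (hx v).le, ?_⟩
  exact (isGreatest_spectrum_maxEig hMh).unique <| isGreatest_spectrum_of_pos_eigenvector
    (meanRatioMx_nonneg G fun v => (hx v).le) (fun v => Real.sqrt_pos.mpr (hx v)) hMy

/-- The auxiliary matrix `M` with entries `(x_u + x_v)/(2√(x_u x_v))` on edges satisfies
`M y = (q/2) y` for `y_v = √(x_v)`, where `x` is the positive unit-`ℓ¹` eigenvector of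
`Q(G)` for `q = q(G)`; moreover `∑ y_v² = 1` and `q/2` is the largest eigenvalue of `M`. -/
theorem stmt9 {V : Type*} [Fintype V] [DecidableEq V]
    (G : SimpleGraph V) (hcard : 2 ≤ Fintype.card V) (hconn : G.Connected)
    (x : V → ℝ) (hx : ∀ v, 0 < x v) (hsum : ∑ v, x v = 1)
    (heig : (signlessLap G).mulVec x = qIndex G • x)
    (M : Matrix V V ℝ)
    (hM : ∀ u v, M u v =
      if G.Adj u v then (x u + x v) / (2 * Real.sqrt (x u * x v)) else 0)
    (hMh : M.IsHermitian)
    (y : V → ℝ) (hy : ∀ v, y v = Real.sqrt (x v)) :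
    M.mulVec y = (qIndex G / 2) • y ∧ (∑ v, (y v) ^ 2 = 1) ∧
      maxEig hMh = qIndex G / 2 := by
  have := hconn.nonempty
  exact hsum ▸ stmt9_general G hx heig hM hMh hy
end

section
/- Let Γ = (G, σ) be a connected signed graph on a finite vertex set V with |V| ≥ 2, and let w : V → ℝ be a positive weight function. Let W(Γ) be the symmetric matrix with entries W(Γ)_{uv} = σ(uv)·√(w(u)w(v)) for uv ∈ E(G) and 0 otherwise, let D be the diagonal matrix with D_{vv} = ∑_{u : u ∼ v} w(u), and set Q(Γ) = D + W(Γ). For each vertex v, let c_b(v) denote the maximum size of a balanced clique of Γ containing v. Then the largest eigenvalue of Q(Γ) satisfies λ₁(Q(Γ)) ≤ 2·∑_{v ∈ V} (1 − 1/c_b(v))·w(v). -/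
open scoped Classical
open Finset

variable {V : Type*}

/-- A balanced clique of the signed graph `(G, σ)`: a clique of `G` admitting a switching
function `η` with values `±1` such that `σ u v = η u * η v` on all its edges. -/
def IsBalancedClique (G : SimpleGraph V) (σ : V → V → ℝ) (s : Finset V) : Prop :=
  G.IsClique ↑s ∧ ∃ η : V → ℝ, (∀ v ∈ s, η v = 1 ∨ η v = -1) ∧
    ∀ u ∈ s, ∀ v ∈ s, u ≠ v → σ u v = η u * η v

/-- The balanced clique number of the signed graph `(G, σ)`. -/
noncomputable def balancedCliqueNum (G : SimpleGraph V) (σ : V → V → ℝ) : ℕ :=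
  sSup {n | ∃ s : Finset V, s.card = n ∧ IsBalancedClique G σ s}

/-- Maximum size of a balanced clique of the signed graph `(G, σ)` containing `v`. -/
noncomputable def balancedCliqueAt (G : SimpleGraph V) (σ : V → V → ℝ) (v : V) : ℕ :=
  sSup {n | ∃ s : Finset V, s.card = n ∧ IsBalancedClique G σ s ∧ v ∈ s}

/-!
Put `s = √w` and let `y` be a test vector. Then `2 * (y ⬝ᵥ Q *ᵥ y)` is the sum of
`(s v * y u + σ u v * s u * y v) ^ 2` over ordered edges. After switching so that all
`s v * y v` are nonnegative, this sum is at most the corresponding form of the all-negative complete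
graph, namely `2 (∑ s²) (∑ y²) - 2 (∑ |s y|)²`, plus `4 ∑ |s u * y u| |s v * y v|` over the ordered
edges of the positive subgraph `H`. Every clique of `H` is balanced in `Γ`, so
`a v = 1 - 1 / c_b(v)` dominates the Motzkin–Straus value of each clique of `H` through `v`.

The localized Motzkin–Straus inequality says that `min (a u) (a v) - A(H)` is copositive. Indeed
`1 - A(H) / min (a u) (a v)` is copositive, since its form need only be tested on vectors supported
on cliques, and multiplying entrywise by `min (a u) (a v)` preserves copositivity. At
`z = |s * y|`, Cauchy–Schwarz together with `min (b u) (b v) ≤ √(b u) * √(b v)` for `b = 2 * a - 1`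
then yields the bound `4 (∑ a s²) (∑ y²)` for the whole sum.
-/

open scoped Matrix
open Function (support)

section Copositive

lemma min_eq_layer_add_min {a : V → ℝ} (ha : 0 ≤ a) {m : ℝ} (hm : ∀ v, a v ≠ 0 → m ≤ a v)
    (u v : V) :
    min (a u) (a v) = m * ((support a).indicator 1 u * (support a).indicator 1 v) +
      min (a u - m * (support a).indicator 1 u) (a v - m * (support a).indicator 1 v) := by
  have hnonneg : ∀ x, 0 ≤ a x - m * (support a).indicator 1 x := fun x => by
    by_cases hx : a x = 0
    · simp [hx]
    · simpa [hx] using hm x hx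
  by_cases hu : a u = 0
  · have hrest := hnonneg v
    simp [hu, min_eq_left (show 0 ≤ a v from ha v), min_eq_left hrest]
  by_cases hv : a v = 0
  · have hrest := hnonneg u
    simp [hv, min_eq_right (show 0 ≤ a u from ha u), min_eq_right hrest]
  simp [hu, hv, min_sub_sub_right]

variable [Fintype V]

/-- A real matrix is copositive if its quadratic form is nonnegative on the nonnegative orthant.
Symmetry is not part of the definition. -/
def IsCopositive (M : Matrix V V ℝ) : Prop :=
  ∀ z : V → ℝ, 0 ≤ z → 0 ≤ z ⬝ᵥ M *ᵥ z

lemma dotProduct_mulVec_self_eq_sum (M : Matrix V V ℝ) (z : V → ℝ) :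
    z ⬝ᵥ M *ᵥ z = ∑ u, ∑ v, M u v * (z u * z v) := by
  simp only [dotProduct, Matrix.mulVec, mul_sum]
  exact sum_congr rfl fun u _ => sum_congr rfl fun v _ => by ring

lemma smul_add_smul_quadratic_eq (M : Matrix V V ℝ) (z d : V → ℝ) (s t : ℝ) :
    s * ((z + t • d) ⬝ᵥ M *ᵥ (z + t • d)) + t * ((z - s • d) ⬝ᵥ M *ᵥ (z - s • d)) =
      (s + t) * (z ⬝ᵥ M *ᵥ z + s * t * (d ⬝ᵥ M *ᵥ d)) := by
  simp only [Matrix.mulVec_add, Matrix.mulVec_sub, Matrix.mulVec_smul, add_dotProduct,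
    sub_dotProduct, dotProduct_add, dotProduct_sub, smul_dotProduct, dotProduct_smul, smul_eq_mul]
  ring

lemma single_sub_single_quadratic_eq (M : Matrix V V ℝ) (u v : V) :
    (Pi.single u 1 - Pi.single v 1) ⬝ᵥ M *ᵥ (Pi.single u 1 - Pi.single v 1) =
      M u u + M v v - (M u v + M v u) := by
  simp only [Matrix.mulVec_sub, Matrix.mulVec_single_one, sub_dotProduct, dotProduct_sub,
    single_one_dotProduct, Matrix.col_apply]
  ring

-- Layer-cake decomposition of `min (a u) (a v)`: the lowest layer is `m • 1_S 1_Sᵀ` with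
-- `S = support a`, and removing it strictly shrinks the support.
theorem IsCopositive.min_hadamard {M : Matrix V V ℝ} (hM : IsCopositive M) {a : V → ℝ}
    (ha : 0 ≤ a) : IsCopositive ((Matrix.of fun u v => min (a u) (a v)) ⊙ M) := by
  intro z hz
  induction hn : (support a).ncard using Nat.strong_induction_on generalizing a with
  | _ n ih =>
  subst hn
  rcases (support a).eq_empty_or_nonempty with hempty | hne
  · simp [Function.support_eq_empty_iff.1 hempty, dotProduct_mulVec_self_eq_sum]
  obtain ⟨x, hx, hmin⟩ := Set.exists_min_image (support a) a (Set.toFinite _) hne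
  set ι : V → ℝ := (support a).indicator 1
  set a' : V → ℝ := fun v => a v - a x * ι v
  have ha' : 0 ≤ a' := fun v => by
    by_cases hv : a v = 0
    · simp [a', ι, hv]
    · simpa [a', ι, hv] using hmin v hv
  have hsubset : support a' ⊆ support a := fun v hv hav => hv (by simp [a', ι, hav])
  have hx' : a' x = 0 := by simp [a', ι, Set.indicator_of_mem hx]
  have hssubset : support a' ⊂ support a :=
    (Set.ssubset_iff_of_subset hsubset).2 ⟨x, hx, by simpa using hx'⟩
  have hlayer : 0 ≤ (ι * z) ⬝ᵥ M *ᵥ (ι * z) :=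
    hM _ (mul_nonneg (Set.indicator_nonneg fun _ _ => zero_le_one) hz)
  have hrest := ih _ (Set.ncard_lt_ncard hssubset) ha' rfl
  have hsplit : z ⬝ᵥ ((Matrix.of fun u v => min (a u) (a v)) ⊙ M) *ᵥ z =
      a x * ((ι * z) ⬝ᵥ M *ᵥ (ι * z)) +
        z ⬝ᵥ ((Matrix.of fun u v => min (a' u) (a' v)) ⊙ M) *ᵥ z := by
    simp only [dotProduct_mulVec_self_eq_sum, mul_sum, ← sum_add_distrib, Matrix.hadamard_apply,
      Matrix.of_apply, Pi.mul_apply]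
    refine sum_congr rfl fun u _ => sum_congr rfl fun v _ => ?_
    rw [min_eq_layer_add_min ha hmin u v]
    ring
  rw [hsplit]
  exact add_nonneg (mul_nonneg (ha x) hlayer) hrest

end Copositive

section MotzkinStraus

/-- The symmetrization move of Motzkin and Straus: all the mass of `z` at `v` is moved to `u`. -/
noncomputable def massTransfer (z : V → ℝ) (u v : V) : V → ℝ :=
  z + z v • (Pi.single u 1 - Pi.single v 1)

lemma massTransfer_nonneg {z : V → ℝ} (hz : 0 ≤ z) (u v : V) : 0 ≤ massTransfer z u v := by
  intro x
  have hx := hz x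
  have hv := hz v
  simp only [massTransfer, Pi.zero_apply, Pi.add_apply, Pi.smul_apply, Pi.sub_apply,
    Pi.single_apply, smul_eq_mul] at *
  split_ifs <;> subst_vars <;> linarith

lemma support_massTransfer_ssubset {z : V → ℝ} {u v : V} (hu : z u ≠ 0) (hv : z v ≠ 0)
    (huv : u ≠ v) : support (massTransfer z u v) ⊂ support z := by
  refine (Set.ssubset_iff_of_subset fun x hx => ?_).2 ⟨v, hv, by simp [massTransfer, huv.symm]⟩
  by_cases hxu : x = u
  · simpa [hxu] using hu
  by_cases hxv : x = v
  · simpa [hxv] using hv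
  simpa [massTransfer, hxu, hxv] using hx

variable [Fintype V]

theorem isCopositive_of_nonneg_on_cliques (G : SimpleGraph V) (M : Matrix V V ℝ)
    (hM : ∀ u v, u ≠ v → ¬ G.Adj u v → M u u + M v v ≤ M u v + M v u)
    (hclique : ∀ z : V → ℝ, 0 ≤ z → G.IsClique (support z) → 0 ≤ z ⬝ᵥ M *ᵥ z) :
    IsCopositive M := by
  intro z hz
  induction hn : (support z).ncard using Nat.strong_induction_on generalizing z with
  | _ n ih =>
  subst hn
  by_cases hG : G.IsClique (support z)
  · exact hclique z hz hG
  obtain ⟨u, hu, v, hv, huv, hadj⟩ : ∃ u, z u ≠ 0 ∧ ∃ v, z v ≠ 0 ∧ u ≠ v ∧ ¬ G.Adj u v := by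
    simpa [SimpleGraph.IsClique, Set.Pairwise] using hG
  have hzu : 0 < z u := (hz u).lt_of_ne' hu
  have hzv : 0 < z v := (hz v).lt_of_ne' hv
  set d : V → ℝ := Pi.single u 1 - Pi.single v 1
  have hd : d ⬝ᵥ M *ᵥ d ≤ 0 := by
    rw [single_sub_single_quadratic_eq]
    exact sub_nonpos.2 (hM u v huv hadj)
  have hto_u : 0 ≤ (z + z v • d) ⬝ᵥ M *ᵥ (z + z v • d) :=
    ih _ (Set.ncard_lt_ncard (support_massTransfer_ssubset hu hv huv)) _
      (massTransfer_nonneg hz u v) rfl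
  have hto_v : 0 ≤ (z - z u • d) ⬝ᵥ M *ᵥ (z - z u • d) := by
    have htransfer : z - z u • d = massTransfer z v u := by
      rw [massTransfer, ← neg_sub (Pi.single u 1), smul_neg, sub_eq_add_neg]
    rw [htransfer]
    exact ih _ (Set.ncard_lt_ncard (support_massTransfer_ssubset hv hu huv.symm)) _
      (massTransfer_nonneg hz v u) rfl
  have hconvex : 0 ≤ (z u + z v) * (z ⬝ᵥ M *ᵥ z + z u * z v * (d ⬝ᵥ M *ᵥ d)) := by
    rw [← smul_add_smul_quadratic_eq]
    positivity
  have hsum := nonneg_of_mul_nonneg_right hconvex (add_pos hzu hzv)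
  have := mul_nonpos_of_nonneg_of_nonpos (mul_pos hzu hzv).le hd
  linarith

lemma sum_sum_offDiag_le_of_support_subset {z : V → ℝ} {C : Finset V} (hC : support z ⊆ C) :
    ∑ u, ∑ v, (if u = v then 0 else z u * z v) ≤ (1 - 1 / (#C : ℝ)) * (∑ v, z v) ^ 2 := by
  have hsum : ∑ v, z v = ∑ v ∈ C, z v :=
    (sum_subset (subset_univ C) fun v _ hv => by_contra fun h => hv (hC h)).symm
  have hcauchy : (∑ v, z v) ^ 2 / #C ≤ ∑ v, z v ^ 2 := by
    refine div_le_of_le_mul₀ (by positivity) (by positivity) ?_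
    calc (∑ v, z v) ^ 2 ≤ #C * ∑ v ∈ C, z v ^ 2 := hsum ▸ sq_sum_le_card_mul_sum_sq
      _ ≤ #C * ∑ v, z v ^ 2 := by
        gcongr
        exact subset_univ C
      _ = (∑ v, z v ^ 2) * #C := mul_comm _ _
  calc ∑ u, ∑ v, (if u = v then 0 else z u * z v)
      = ∑ u, ∑ v, (z u * z v - if u = v then z u ^ 2 else 0) :=
        sum_congr rfl fun u _ => sum_congr rfl fun v _ => by
          split_ifs with h
          · rw [h]; ring
          · ring
    _ = (∑ v, z v) ^ 2 - ∑ v, z v ^ 2 := by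
        simp only [sum_sub_distrib, sum_ite_eq, mem_univ, if_true, ← sum_mul_sum, sq]
    _ ≤ (1 - 1 / (#C : ℝ)) * (∑ v, z v) ^ 2 := by
        rw [one_sub_mul, one_div_mul_eq_div]
        gcongr

end MotzkinStraus

section LocalCliqueBound

/-- The function `a` bounds the Motzkin–Straus value `1 - 1 / #C` of every clique `C` of `G` at
each vertex of `C`. -/
def IsLocalCliqueBound (G : SimpleGraph V) (a : V → ℝ) : Prop :=
  ∀ C : Finset V, G.IsClique C → ∀ v ∈ C, 1 - 1 / (#C : ℝ) ≤ a v

namespace IsLocalCliqueBound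

variable {G : SimpleGraph V} {a : V → ℝ}

lemma nonneg (ha : IsLocalCliqueBound G a) : 0 ≤ a := fun v => by
  simpa using ha {v} (by simp) v (by simp)

lemma half_le_of_adj (ha : IsLocalCliqueBound G a) {u v : V} (h : G.Adj u v) : 1 / 2 ≤ a u := by
  have hu := ha {u, v} (by simp [h]) u (by simp)
  rw [card_pair h.ne, Nat.cast_ofNat] at hu
  linarith

lemma inv_min_le (ha : IsLocalCliqueBound G a) {C : Finset V} (hC : G.IsClique C) {u v : V}
    (hu : u ∈ C) (hv : v ∈ C) (huv : u ≠ v) :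
    (min (a u) (a v))⁻¹ ≤ (1 - 1 / (#C : ℝ))⁻¹ := by
  have hcard : (1 : ℝ) < #C := mod_cast one_lt_card.2 ⟨u, hu, v, hv, huv⟩
  have hpos : (0 : ℝ) < 1 - 1 / #C := sub_pos.2 ((div_lt_one (by linarith)).2 hcard)
  exact inv_anti₀ hpos (le_min (ha C hC u hu) (ha C hC v hv))

variable [Fintype V]

lemma sum_adj_inv_min_le_of_isClique_support (ha : IsLocalCliqueBound G a) {z : V → ℝ}
    (hz : 0 ≤ z) (hG : G.IsClique (support z)) :
    ∑ u, ∑ v, (if G.Adj u v then (min (a u) (a v))⁻¹ else 0) * (z u * z v) ≤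
      (∑ v, z v) ^ 2 := by
  set C : Finset V := (support z).toFinset
  have hC : G.IsClique C := by simpa [C] using hG
  set r : ℝ := 1 - 1 / (#C : ℝ)
  have hr : 0 ≤ r := sub_nonneg.2 (by simpa using Nat.cast_inv_le_one (#C))
  have hterm : ∀ u v, (if G.Adj u v then (min (a u) (a v))⁻¹ else 0) * (z u * z v) ≤
      r⁻¹ * (if u = v then 0 else z u * z v) := fun u v => by
    by_cases huv : u = v
    · simp [huv]
    by_cases hu : z u = 0
    · simp [hu]
    by_cases hv : z v = 0
    · simp [hv]
    rw [if_pos (hG hu hv huv), if_neg huv]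
    exact mul_le_mul_of_nonneg_right (ha.inv_min_le hC (by simpa [C]) (by simpa [C]) huv)
      (mul_nonneg (hz u) (hz v))
  calc _ ≤ ∑ u, ∑ v, r⁻¹ * (if u = v then 0 else z u * z v) :=
        sum_le_sum fun u _ => sum_le_sum fun v _ => hterm u v
    _ = r⁻¹ * ∑ u, ∑ v, (if u = v then 0 else z u * z v) := by simp only [mul_sum]
    _ ≤ r⁻¹ * (r * (∑ v, z v) ^ 2) := by
        gcongr
        exact sum_sum_offDiag_le_of_support_subset (by simp [C])
    _ = r⁻¹ * r * (∑ v, z v) ^ 2 := (mul_assoc _ _ _).symm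
    _ ≤ (∑ v, z v) ^ 2 := mul_le_of_le_one_left (sq_nonneg _) inv_mul_le_one

theorem isCopositive_one_sub_adj_inv_min (ha : IsLocalCliqueBound G a) :
    IsCopositive (Matrix.of fun u v => 1 - if G.Adj u v then (min (a u) (a v))⁻¹ else 0) := by
  refine isCopositive_of_nonneg_on_cliques G _ (fun u v _ h => ?_) fun z hz hG => ?_
  · simp [h, G.adj_comm v u]
  · simp only [dotProduct_mulVec_self_eq_sum, Matrix.of_apply, sub_mul, one_mul, sum_sub_distrib,
      ← sum_mul_sum, ← sq]
    exact sub_nonneg.2 (ha.sum_adj_inv_min_le_of_isClique_support hz hG)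

theorem isCopositive_min_sub_adjMatrix (ha : IsLocalCliqueBound G a) :
    IsCopositive (Matrix.of (fun u v => min (a u) (a v)) - G.adjMatrix ℝ) := by
  have hmin : ∀ {u v}, G.Adj u v → min (a u) (a v) ≠ 0 := fun h =>
    (one_half_pos.trans_le (le_min (ha.half_le_of_adj h) (ha.half_le_of_adj h.symm))).ne'
  convert ha.isCopositive_one_sub_adj_inv_min.min_hadamard ha.nonneg using 1
  ext u v
  by_cases h : G.Adj u v
  · simp [h, mul_sub, mul_inv_cancel₀ (hmin h)]
  · simp [h]

end IsLocalCliqueBound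

end LocalCliqueBound

section CauchySchwarz

lemma min_le_sqrt_mul_sqrt {x y : ℝ} (hx : 0 ≤ x) (hy : 0 ≤ y) : min x y ≤ √x * √y :=
  calc min x y = √(min x y) * √(min x y) := (Real.mul_self_sqrt (le_min hx hy)).symm
    _ ≤ √x * √y := by
      gcongr
      exacts [min_le_left x y, min_le_right x y]

variable [Fintype V]

lemma sum_min_mul_abs_mul_abs_le {b : V → ℝ} (hb : 0 ≤ b) (s y : V → ℝ) :
    ∑ u, ∑ v, min (b u) (b v) * (|s u * y u| * |s v * y v|) ≤
      (∑ v, b v * s v ^ 2) * ∑ v, y v ^ 2 :=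
  calc _ ≤ ∑ u, ∑ v, √(b u) * √(b v) * (|s u * y u| * |s v * y v|) := by
        gcongr with u _ v _
        exact min_le_sqrt_mul_sqrt (hb u) (hb v)
    _ = (∑ v, √(b v) * |s v * y v|) ^ 2 := by
        rw [sq, sum_mul_sum]
        exact sum_congr rfl fun u _ => sum_congr rfl fun v _ => by ring
    _ ≤ (∑ v, b v * s v ^ 2) * ∑ v, y v ^ 2 := by
        refine sum_sq_le_sum_mul_sum_of_sq_le_mul _ (fun v _ => mul_nonneg (hb v) (sq_nonneg _))
          (fun v _ => sq_nonneg _) fun v _ => le_of_eq ?_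
        rw [mul_pow, Real.sq_sqrt (hb v), sq_abs]
        ring

theorem IsLocalCliqueBound.two_mul_sum_adj_le {G : SimpleGraph V} {a : V → ℝ}
    (ha : IsLocalCliqueBound G a) (ha_half : ∀ v, 1 / 2 ≤ a v) (s y : V → ℝ) :
    2 * ∑ u, ∑ v, (if G.Adj u v then |s u * y u| * |s v * y v| else 0) ≤
      (∑ v, |s v * y v|) ^ 2 + (∑ v, (2 * a v - 1) * s v ^ 2) * ∑ v, y v ^ 2 := by
  have hcop := ha.isCopositive_min_sub_adjMatrix (fun v => |s v * y v|) fun v => abs_nonneg _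
  simp only [dotProduct_mulVec_self_eq_sum, Matrix.sub_apply, Matrix.of_apply,
    SimpleGraph.adjMatrix_apply, sub_mul, ite_mul, one_mul, zero_mul, sum_sub_distrib] at hcop
  have hmin : ∀ u v, 2 * min (a u) (a v) = 1 + min (2 * a u - 1) (2 * a v - 1) := fun u v => by
    rw [min_sub_sub_right, ← mul_min_of_nonneg _ _ zero_le_two]
    ring
  calc _ ≤ 2 * ∑ u, ∑ v, min (a u) (a v) * (|s u * y u| * |s v * y v|) := by linarith
    _ = (∑ v, |s v * y v|) ^ 2 +
        ∑ u, ∑ v, min (2 * a u - 1) (2 * a v - 1) * (|s u * y u| * |s v * y v|) := by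
      rw [sq, sum_mul_sum, mul_sum, ← sum_add_distrib]
      simp only [mul_sum, ← sum_add_distrib, ← mul_assoc, hmin]
      exact sum_congr rfl fun u _ => sum_congr rfl fun v _ => by ring
    _ ≤ _ := by
      gcongr
      exact sum_min_mul_abs_mul_abs_le (fun v => show 0 ≤ 2 * a v - 1 by linarith [ha_half v]) s y

end CauchySchwarz

section Switching

variable {G : SimpleGraph V} {σ : V → V → ℝ}

/-- The edges of the signed graph `(G, σ)` that become positive after switching by `η`. -/
def switchedPositiveGraph (G : SimpleGraph V) (hσsymm : ∀ u v, σ u v = σ v u) (η : V → ℝ) :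
    SimpleGraph V where
  Adj u v := G.Adj u v ∧ σ u v = η u * η v
  symm := ⟨fun u v h => ⟨h.1.symm, by rw [hσsymm v u, h.2, mul_comm]⟩⟩
  loopless := ⟨fun _ h => G.irrefl h.1⟩

lemma isBalancedClique_of_isClique_switchedPositiveGraph {hσsymm : ∀ u v, σ u v = σ v u}
    {η : V → ℝ} (hη : ∀ v, η v = 1 ∨ η v = -1) {C : Finset V}
    (hC : (switchedPositiveGraph G hσsymm η).IsClique C) : IsBalancedClique G σ C :=
  ⟨fun _ hu _ hv huv => (hC hu hv huv).1, η, fun v _ => hη v,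
    fun _ hu _ hv huv => (hC hu hv huv).2⟩

lemma isBalancedClique_singleton (G : SimpleGraph V) (σ : V → V → ℝ) (v : V) :
    IsBalancedClique G σ {v} :=
  ⟨by simp, 1, by simp, by simp +contextual [eq_comm]⟩

lemma isBalancedClique_pair (hσsymm : ∀ u v, σ u v = σ v u) {u v : V} (h : G.Adj u v)
    (huv : σ u v = 1 ∨ σ u v = -1) : IsBalancedClique G σ {u, v} := by
  refine ⟨by simp [h], fun x => if x = u then 1 else σ u v, fun x _ => ?_, ?_⟩
  · by_cases hx : x = u <;> simp [hx, huv]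
  · simp [h.ne.symm, h.ne, hσsymm v u]

lemma exists_sign_mul_abs_eq (p : V → ℝ) :
    ∃ η : V → ℝ, (∀ v, η v = 1 ∨ η v = -1) ∧ ∀ v, η v * |p v| = p v := by
  have hsign : ∀ v, ∃ e : ℝ, (e = 1 ∨ e = -1) ∧ e * |p v| = p v := fun v => by
    rcases abs_choice (p v) with h | h
    · exact ⟨1, Or.inl rfl, by rw [h, one_mul]⟩
    · exact ⟨-1, Or.inr rfl, by rw [h, neg_one_mul, neg_neg]⟩
  choose η hη hηp using hsign
  exact ⟨η, hη, hηp⟩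

lemma sign_mul_sign_mul_sign_eq {e f g : ℝ} (he : e = 1 ∨ e = -1) (hf : f = 1 ∨ f = -1)
    (hg : g = 1 ∨ g = -1) : e * (f * g) = if e = f * g then 1 else -1 := by
  rcases he with rfl | rfl <;> rcases hf with rfl | rfl <;> rcases hg with rfl | rfl <;> norm_num

lemma signed_edge_sq_le (hσsymm : ∀ u v, σ u v = σ v u)
    (hσ : ∀ u v, G.Adj u v → σ u v = 1 ∨ σ u v = -1) {η s y : V → ℝ}
    (hη : ∀ v, η v = 1 ∨ η v = -1) (hηsy : ∀ v, η v * |s v * y v| = s v * y v) (u v : V) :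
    (if G.Adj u v then (s v * y u + σ u v * (s u * y v)) ^ 2 else 0) ≤
      s v ^ 2 * y u ^ 2 + s u ^ 2 * y v ^ 2 - 2 * (|s u * y u| * |s v * y v|) +
        4 * if (switchedPositiveGraph G hσsymm η).Adj u v then |s u * y u| * |s v * y v|
          else 0 := by
  have hnonneg : 0 ≤ s v ^ 2 * y u ^ 2 + s u ^ 2 * y v ^ 2 - 2 * (|s u * y u| * |s v * y v|) := by
    have h := sq_nonneg (|s v * y u| - |s u * y v|)
    rw [sub_sq, sq_abs, sq_abs] at h
    simp only [abs_mul] at h ⊢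
    linarith
  by_cases hadj : G.Adj u v
  · have hσsq : σ u v ^ 2 = 1 := sq_eq_one_iff.2 (hσ u v hadj)
    have hcross : σ u v * ((s u * y u) * (s v * y v)) =
        (if σ u v = η u * η v then 1 else -1) * (|s u * y u| * |s v * y v|) := by
      rw [← sign_mul_sign_mul_sign_eq (hσ u v hadj) (hη u) (hη v)]
      nth_rw 1 [← hηsy u, ← hηsy v]
      ring
    have hexpand : (s v * y u + σ u v * (s u * y v)) ^ 2 = s v ^ 2 * y u ^ 2 +
        σ u v ^ 2 * (s u ^ 2 * y v ^ 2) + 2 * (σ u v * ((s u * y u) * (s v * y v))) := by ring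
    rw [if_pos hadj, hexpand, hcross, hσsq]
    simp only [switchedPositiveGraph, hadj, true_and]
    split_ifs <;> linarith
  · simpa [hadj, switchedPositiveGraph] using hnonneg

end Switching

section SignedEdgeEnergy

variable [Fintype V] {G : SimpleGraph V} {σ : V → V → ℝ}

/-- The quadratic form `∑ (s v * y u + σ u v * s u * y v) ^ 2` over the ordered edges `(u, v)` of
the signed graph `(G, σ)`. For `s v = √(w v)` it is twice the quadratic form of the weighted
signless Laplacian with vertex weights `w`. -/
noncomputable def signedEdgeEnergy (G : SimpleGraph V) (σ : V → V → ℝ) (s y : V → ℝ) : ℝ :=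
  ∑ u, ∑ v, if G.Adj u v then (s v * y u + σ u v * (s u * y v)) ^ 2 else 0

-- After switching so that every `s v * y v` is nonnegative, only the positive edges contribute
-- beyond the complete-graph form `∑ u, ∑ v, (|s v * y u| - |s u * y v|) ^ 2`.
lemma exists_signedEdgeEnergy_le (hσsymm : ∀ u v, σ u v = σ v u)
    (hσ : ∀ u v, G.Adj u v → σ u v = 1 ∨ σ u v = -1) (s y : V → ℝ) :
    ∃ H : SimpleGraph V, (∀ C : Finset V, H.IsClique C → IsBalancedClique G σ C) ∧
      signedEdgeEnergy G σ s y ≤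
        2 * ((∑ v, s v ^ 2) * ∑ v, y v ^ 2) - 2 * (∑ v, |s v * y v|) ^ 2 +
          4 * ∑ u, ∑ v, if H.Adj u v then |s u * y u| * |s v * y v| else 0 := by
  obtain ⟨η, hη, hηsy⟩ := exists_sign_mul_abs_eq fun v => s v * y v
  refine ⟨switchedPositiveGraph G hσsymm η,
    fun C => isBalancedClique_of_isClique_switchedPositiveGraph hη, ?_⟩
  have hswap : ∑ u, ∑ v, s v ^ 2 * y u ^ 2 = ∑ u, ∑ v, s u ^ 2 * y v ^ 2 := sum_comm
  refine (sum_le_sum fun u _ => sum_le_sum fun v _ =>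
    signed_edge_sq_le hσsymm hσ hη hηsy u v).trans_eq ?_
  rw [sq (∑ v, |s v * y v|), sum_mul_sum, sum_mul_sum]
  simp only [sum_add_distrib, sum_sub_distrib, hswap, ← mul_sum]
  ring

theorem signedEdgeEnergy_le_of_half_le (hσsymm : ∀ u v, σ u v = σ v u)
    (hσ : ∀ u v, G.Adj u v → σ u v = 1 ∨ σ u v = -1) {a : V → ℝ}
    (ha : ∀ C : Finset V, IsBalancedClique G σ C → ∀ v ∈ C, 1 - 1 / (#C : ℝ) ≤ a v)
    (ha_half : ∀ v, 1 / 2 ≤ a v) (s y : V → ℝ) :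
    signedEdgeEnergy G σ s y ≤ 4 * ((∑ v, a v * s v ^ 2) * ∑ v, y v ^ 2) := by
  obtain ⟨H, hH, hle⟩ := exists_signedEdgeEnergy_le hσsymm hσ s y
  have hbound : IsLocalCliqueBound H a := fun C hC => ha C (hH C hC)
  have hpos := hbound.two_mul_sum_adj_le ha_half s y
  have hcoeff : ∑ v, (2 * a v - 1) * s v ^ 2 = 2 * ∑ v, a v * s v ^ 2 - ∑ v, s v ^ 2 := by
    simp only [sub_mul, one_mul, sum_sub_distrib, mul_sum, mul_assoc]
  rw [hcoeff] at hpos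
  linarith

-- A vertex with `a v < 1 / 2` is isolated, so replacing `s v` by `0` there leaves the energy alone.
theorem signedEdgeEnergy_le (hσsymm : ∀ u v, σ u v = σ v u)
    (hσ : ∀ u v, G.Adj u v → σ u v = 1 ∨ σ u v = -1) {a : V → ℝ}
    (ha : ∀ C : Finset V, IsBalancedClique G σ C → ∀ v ∈ C, 1 - 1 / (#C : ℝ) ≤ a v)
    (s y : V → ℝ) :
    signedEdgeEnergy G σ s y ≤ 4 * ((∑ v, a v * s v ^ 2) * ∑ v, y v ^ 2) := by
  have ha0 : ∀ v, 0 ≤ a v := fun v => by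
    simpa using ha {v} (isBalancedClique_singleton G σ v) v (by simp)
  have ha_adj : ∀ {u v}, G.Adj u v → 1 / 2 ≤ a u := fun {u v} h => by
    have hu := ha {u, v} (isBalancedClique_pair hσsymm h (hσ u v h)) u (by simp)
    rw [card_pair h.ne, Nat.cast_ofNat] at hu
    linarith
  set t : V → ℝ := fun v => if 1 / 2 ≤ a v then s v else 0 with ht
  have henergy : signedEdgeEnergy G σ s y = signedEdgeEnergy G σ t y :=
    sum_congr rfl fun u _ => sum_congr rfl fun v _ => by
      by_cases h : G.Adj u v
      · simp only [ht, if_pos (ha_adj h), if_pos (ha_adj h.symm)]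
      · simp only [if_neg h]
  rw [henergy]
  refine (signedEdgeEnergy_le_of_half_le hσsymm hσ (a := fun v => max (a v) (1 / 2))
    (fun C hC v hv => (ha C hC v hv).trans (le_max_left _ _)) (fun v => le_max_right _ _)
    t y).trans ?_
  refine mul_le_mul_of_nonneg_left (mul_le_mul_of_nonneg_right (sum_le_sum fun v _ => ?_)
    (sum_nonneg fun v _ => sq_nonneg _)) zero_le_four
  by_cases hv : 1 / 2 ≤ a v
  · simp only [ht, if_pos hv, max_eq_left hv, le_refl]
  · simp only [ht, if_neg hv, zero_pow two_ne_zero, mul_zero]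
    exact mul_nonneg (ha0 v) (sq_nonneg _)

end SignedEdgeEnergy

section BalancedCliqueAt

variable [Finite V] {G : SimpleGraph V} {σ : V → V → ℝ}

lemma IsBalancedClique.card_le_balancedCliqueAt {C : Finset V} (hC : IsBalancedClique G σ C)
    {v : V} (hv : v ∈ C) : #C ≤ balancedCliqueAt G σ v := by
  refine le_csSup ⟨Nat.card V, ?_⟩ ⟨C, rfl, hC, hv⟩
  rintro _ ⟨s, rfl, -⟩
  simpa using Set.ncard_le_card (s : Set V)

lemma IsBalancedClique.one_sub_one_div_card_le {C : Finset V} (hC : IsBalancedClique G σ C)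
    {v : V} (hv : v ∈ C) : 1 - 1 / (#C : ℝ) ≤ 1 - 1 / (balancedCliqueAt G σ v : ℝ) := by
  have hpos : (0 : ℝ) < #C := mod_cast card_pos.2 ⟨v, hv⟩
  gcongr
  exact hC.card_le_balancedCliqueAt hv

end BalancedCliqueAt

section SignlessLaplacian

variable [Fintype V] [DecidableEq V]

lemma maxEig_le_of_forall_dotProduct_mulVec_le {A : Matrix V V ℝ} (hA : A.IsHermitian) {B : ℝ}
    (hB : 0 ≤ B) (h : ∀ y : V → ℝ, y ⬝ᵥ A *ᵥ y ≤ B * ∑ v, y v ^ 2) : maxEig hA ≤ B := by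
  refine Real.iSup_le (fun i => ?_) hB
  have hnorm : ∑ v, hA.eigenvectorBasis i v ^ 2 = 1 := by
    rw [← EuclideanSpace.real_norm_sq_eq, hA.eigenvectorBasis.orthonormal.1 i, one_pow]
  simpa [hA.eigenvalues_eq, hnorm] using h (hA.eigenvectorBasis i)

/-- The signless Laplacian `Q(Γ) = D + W(Γ)` of the signed graph `Γ = (G, σ)` with vertex
weights `w`. -/
noncomputable def weightedSignlessLap (G : SimpleGraph V) (σ : V → V → ℝ) (w : V → ℝ) :
    Matrix V V ℝ :=
  Matrix.of fun u v =>
    if u = v then ∑ z, if G.Adj z v then w z else 0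
    else if G.Adj u v then σ u v * √(w u * w v) else 0

lemma two_mul_weightedSignlessLap_quadratic_eq {G : SimpleGraph V} {σ : V → V → ℝ}
    (hσ : ∀ u v, G.Adj u v → σ u v = 1 ∨ σ u v = -1) {w : V → ℝ} (hw : ∀ v, 0 ≤ w v)
    (y : V → ℝ) :
    2 * (y ⬝ᵥ weightedSignlessLap G σ w *ᵥ y) =
      signedEdgeEnergy G σ (fun v => √(w v)) y := by
  have hentry : ∀ u v, weightedSignlessLap G σ w u v * (y u * y v) =
      (if u = v then ∑ z, (if G.Adj u z then w z * y u ^ 2 else 0) else 0) +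
        if G.Adj u v then σ u v * (√(w u) * √(w v)) * (y u * y v) else 0 := fun u v => by
    by_cases huv : u = v
    · subst huv
      simp only [weightedSignlessLap, Matrix.of_apply, if_true, SimpleGraph.irrefl, if_false,
        add_zero, sum_mul, ite_mul, zero_mul, G.adj_comm u, sq]
    · simp only [weightedSignlessLap, Matrix.of_apply, if_neg huv, zero_add, ite_mul, zero_mul,
        Real.sqrt_mul (hw u)]
  have hswap : ∑ u, ∑ v, (if G.Adj u v then w u * y v ^ 2 else 0) =
      ∑ u, ∑ v, (if G.Adj u v then w v * y u ^ 2 else 0) := by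
    rw [sum_comm]
    simp only [G.adj_comm]
  have hterm : ∀ u v, (if G.Adj u v then (√(w v) * y u + σ u v * (√(w u) * y v)) ^ 2 else 0) =
      (if G.Adj u v then w v * y u ^ 2 else 0) + (if G.Adj u v then w u * y v ^ 2 else 0) +
        2 * if G.Adj u v then σ u v * (√(w u) * √(w v)) * (y u * y v) else 0 := fun u v => by
    split_ifs with h
    · have hσsq : σ u v ^ 2 = 1 := sq_eq_one_iff.2 (hσ u v h)
      rw [add_sq, mul_pow, mul_pow, mul_pow, hσsq, Real.sq_sqrt (hw u), Real.sq_sqrt (hw v)]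
      ring
    · simp
  simp only [dotProduct_mulVec_self_eq_sum, signedEdgeEnergy, hentry, hterm, sum_add_distrib,
    sum_ite_eq, mem_univ, if_true, hswap, ← mul_sum]
  ring

theorem stmt11_general (G : SimpleGraph V) (σ : V → V → ℝ) (hσsymm : ∀ u v, σ u v = σ v u)
    (hσ : ∀ u v, G.Adj u v → σ u v = 1 ∨ σ u v = -1) (w : V → ℝ) (hw : ∀ v, 0 ≤ w v)
    (hQ : (weightedSignlessLap G σ w).IsHermitian) :
    maxEig hQ ≤ 2 * ∑ v, (1 - 1 / (balancedCliqueAt G σ v : ℝ)) * w v := by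
  have hnonneg : 0 ≤ 2 * ∑ v, (1 - 1 / (balancedCliqueAt G σ v : ℝ)) * w v :=
    mul_nonneg zero_le_two <| sum_nonneg fun v _ =>
      mul_nonneg (sub_nonneg.2 (by simpa using Nat.cast_inv_le_one _)) (hw v)
  refine maxEig_le_of_forall_dotProduct_mulVec_le hQ hnonneg fun y => ?_
  have henergy := signedEdgeEnergy_le hσsymm hσ
    (fun C hC v hv => hC.one_sub_one_div_card_le hv) (fun v => √(w v)) y
  simp only [← two_mul_weightedSignlessLap_quadratic_eq hσ hw, Real.sq_sqrt (hw _)] at henergy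
  linarith

end SignlessLaplacian

/-- Localized bound for the weighted signless Laplacian of a connected signed graph:
`λ₁(Q(Γ)) ≤ 2 ∑_v (1 - 1/c_b(v)) w(v)`. -/
theorem stmt11 {V : Type*} [Fintype V] [DecidableEq V]
    (G : SimpleGraph V) (hcard : 2 ≤ Fintype.card V) (hconn : G.Connected)
    (σ : V → V → ℝ) (hσsymm : ∀ u v, σ u v = σ v u)
    (hσ : ∀ u v, G.Adj u v → σ u v = 1 ∨ σ u v = -1)
    (w : V → ℝ) (hw : ∀ v, 0 < w v)
    (Q : Matrix V V ℝ)
    (hQdef : ∀ u v, Q u v =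
      if u = v then (∑ z, if G.Adj z v then w z else 0)
      else (if G.Adj u v then σ u v * Real.sqrt (w u * w v) else 0))
    (hQ : Q.IsHermitian) :
    maxEig hQ ≤ 2 * ∑ v, (1 - 1 / (balancedCliqueAt G σ v : ℝ)) * w v := by
  obtain rfl : Q = weightedSignlessLap G σ w := Matrix.ext hQdef
  exact stmt11_general G σ hσsymm hσ w (fun v => (hw v).le) hQ
end

section
/- For n ≥ 4, let Q_n be the n × n real symmetric matrix whose diagonal entries all equal n − 1, whose (1,2)- and (2,1)-entries equal −1, and all of whose other off-diagonal entries equal 1 (this is the signless Laplacian of the signed complete graph K_n with exactly one negative edge). Then the largest eigenvalue of Q_n equals (3n − 6 + √(n² + 4n − 12))/2. -/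
open scoped Classical
open Finset

variable {V : Type*}

/-!
Write `Q = (n - 2) I + A`, where `A` is the all-ones matrix with its `(1,2)` and `(2,1)` entries
negated, and let `A x = m x`. Subtracting the first two coordinates of this equation gives
`(m - 2) (x₁ - x₂) = 0`. If `m ≠ 2`, put `t = x₁ = x₂`; the first coordinate gives
`∑ xᵥ = (m + 2) t`, and summing all coordinates gives `(m² - (n - 2) m - 2 (n - 2)) t = 0`; if
`t = 0` then `∑ xᵥ = 0`, so `m x = 0` and `m = 0`. Hence every eigenvalue of `A` is `0`, `2` or a
root of the quadratic, whose larger root is an eigenvalue and is at least `2` once `n ≥ 3`.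
-/

theorem isGreatest_root_sq_eq_mul_add {b c : ℝ} (h : 0 ≤ b ^ 2 + 4 * c) :
    IsGreatest {x : ℝ | x ^ 2 = b * x + c} ((b + √(b ^ 2 + 4 * c)) / 2) := by
  refine ⟨?_, fun x hx ↦ ?_⟩
  · rw [Set.mem_ofPred_eq]
    linear_combination Real.sq_sqrt h / 4
  · rw [Set.mem_ofPred_eq] at hx
    have hsq : (2 * x - b) ^ 2 = b ^ 2 + 4 * c := by linear_combination 4 * hx
    have hle : 2 * x - b ≤ √(b ^ 2 + 4 * c) := Real.le_sqrt_of_sq_le hsq.le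
    linarith

section Spectrum

variable [Fintype V] [DecidableEq V]

theorem mem_spectrum_iff_exists_mulVec_eq_smul {K : Type*} [Field K] {A : Matrix V V K} {m : K} :
    m ∈ spectrum K A ↔ ∃ x ≠ 0, A.mulVec x = m • x := by
  rw [← Matrix.spectrum_toLin', ← Module.End.hasEigenvalue_iff_mem_spectrum]
  constructor
  · intro h
    obtain ⟨x, hx⟩ := h.exists_hasEigenvector
    exact ⟨x, hx.2, by simpa only [Matrix.toLin'_apply] using hx.apply_eq_smul⟩
  · rintro ⟨x, hx, hAx⟩
    exact Module.End.hasEigenvalue_of_hasEigenvector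
      ⟨Module.End.mem_eigenspace_iff.2 (by rwa [Matrix.toLin'_apply]), hx⟩

theorem maxEig_eq_sSup_spectrum {A : Matrix V V ℝ} (hA : A.IsHermitian) :
    maxEig hA = sSup (spectrum ℝ A) := by
  rw [hA.spectrum_real_eq_range_eigenvalues, sSup_range, maxEig]

end Spectrum

section NegEdgeMatrix

variable [DecidableEq V]

/-- The all-ones matrix with the entries `(a, b)` and `(b, a)` negated, for `a ≠ b`. It is `I + A`
with `A` the adjacency matrix of the signed complete graph on `V` whose only negative edge is `ab`;
adding `|V| - 2` times the identity gives the signless Laplacian of that signed graph. -/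
def negEdgeMatrix (R : Type*) [Ring R] (a b : V) : Matrix V V R :=
  Matrix.of (fun _ _ ↦ 1) - Matrix.single a b 2 - Matrix.single b a 2

variable [Fintype V]

theorem algebraMap_add_negEdgeMatrix_apply {R : Type*} [CommRing R] {a b : V} (hab : a ≠ b)
    (c : R) (u v : V) :
    (algebraMap R (Matrix V V R) c + negEdgeMatrix R a b) u v =
      if u = v then c + 1 else if (u = a ∧ v = b) ∨ (u = b ∧ v = a) then -1 else 1 := by
  simp only [negEdgeMatrix, Matrix.add_apply, Matrix.sub_apply, Matrix.of_apply,
    Matrix.algebraMap_matrix_apply, Matrix.single_apply, Algebra.algebraMap_self, RingHom.id_apply]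
  grind

theorem negEdgeMatrix_mulVec_apply {R : Type*} [Ring R] (a b : V) (x : V → R) (u : V) :
    (negEdgeMatrix R a b).mulVec x u =
      ∑ v, x v - (if u = a then 2 * x b else 0) - (if u = b then 2 * x a else 0) := by
  have hones : (Matrix.of fun _ _ ↦ (1 : R)).mulVec x u = ∑ v, x v := by
    simp [Matrix.mulVec, dotProduct]
  simp only [negEdgeMatrix, Matrix.sub_mulVec, Matrix.single_mulVec, Function.update_apply,
    Pi.sub_apply, Pi.zero_apply, hones]

theorem sum_negEdgeMatrix_mulVec {R : Type*} [Ring R] (a b : V) (x : V → R) :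
    ∑ u, (negEdgeMatrix R a b).mulVec x u =
      Fintype.card V * ∑ v, x v - 2 * x b - 2 * x a := by
  simp only [negEdgeMatrix_mulVec_apply, sum_sub_distrib, sum_const, card_univ, nsmul_eq_mul,
    sum_ite_eq', mem_univ, if_true]

variable {K : Type*} [Field K] {a b : V} {m : K}

theorem eq_zero_or_eq_two_or_sq_eq_of_mem_spectrum_negEdgeMatrix (hab : a ≠ b)
    (hm : m ∈ spectrum K (negEdgeMatrix K a b)) :
    m = 0 ∨ m = 2 ∨ m ^ 2 = ((Fintype.card V : K) - 2) * m + 2 * (Fintype.card V - 2) := by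
  obtain ⟨x, hx, hAx⟩ := mem_spectrum_iff_exists_mulVec_eq_smul.1 hm
  have hcoord (u : V) :
      ∑ v, x v - (if u = a then 2 * x b else 0) - (if u = b then 2 * x a else 0) = m * x u := by
    rw [← negEdgeMatrix_mulVec_apply, hAx, Pi.smul_apply, smul_eq_mul]
  have ha : ∑ v, x v - 2 * x b = m * x a := by simpa [hab] using hcoord a
  have hb : ∑ v, x v - 2 * x a = m * x b := by simpa [hab.symm] using hcoord b
  have htotal : Fintype.card V * ∑ v, x v - 2 * x b - 2 * x a = m * ∑ v, x v := by
    rw [← sum_negEdgeMatrix_mulVec, hAx, mul_sum]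
    rfl
  refine or_iff_not_imp_left.2 fun hm0 ↦ or_iff_not_imp_left.2 fun hm2 ↦ ?_
  have hxab : x a = x b := by
    refine sub_eq_zero.1 ((mul_eq_zero.1 ?_).resolve_left (sub_ne_zero.2 hm2))
    linear_combination hb - ha
  have hsum : ∑ v, x v = (m + 2) * x a := by linear_combination ha - 2 * hxab
  have hxa : x a ≠ 0 := by
    refine fun hxa ↦ hx (funext fun u ↦ (mul_eq_zero.1 ?_).resolve_left hm0)
    rw [← hcoord u, hsum, ← hxab, hxa]
    simp only [mul_zero, ite_self, sub_zero]
  refine mul_right_cancel₀ hxa ?_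
  linear_combination (Fintype.card V - m) * hsum - htotal + 2 * hxab

theorem mem_spectrum_negEdgeMatrix_of_sq_eq (hab : a ≠ b) (hm0 : m ≠ 0)
    (hm : m ^ 2 = ((Fintype.card V : K) - 2) * m + 2 * (Fintype.card V - 2)) :
    m ∈ spectrum K (negEdgeMatrix K a b) := by
  -- With `x a = x b = m`, coordinate `a` forces `∑ v, x v = m * (m + 2)`, and every coordinate
  -- outside `{a, b}` then forces `x u = m + 2`.
  let x : V → K := fun u ↦ m + 2 - (if u = a then 2 else 0) - (if u = b then 2 else 0)
  have hxa : x a = m := by simp [x, hab]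
  have hxb : x b = m := by simp [x, hab.symm]
  have hsum : ∑ v, x v = m * (m + 2) := by
    simp only [x, sum_sub_distrib, sum_const, card_univ, nsmul_eq_mul, sum_ite_eq', mem_univ,
      if_true]
    linear_combination -hm
  refine mem_spectrum_iff_exists_mulVec_eq_smul.2 ⟨x, fun hx ↦ hm0 ?_, funext fun u ↦ ?_⟩
  · rw [← hxa, hx, Pi.zero_apply]
  · rw [negEdgeMatrix_mulVec_apply, hsum, hxa, hxb, Pi.smul_apply, smul_eq_mul]
    simp only [x, mul_sub, mul_ite, mul_zero, mul_comm m 2]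

theorem isGreatest_spectrum_negEdgeMatrix (hab : a ≠ b) (hV : 3 ≤ Fintype.card V) :
    IsGreatest (spectrum ℝ (negEdgeMatrix ℝ a b))
      (((Fintype.card V : ℝ) - 2 + √((Fintype.card V : ℝ) ^ 2 + 4 * Fintype.card V - 12)) / 2) := by
  have hN : (3 : ℝ) ≤ Fintype.card V := by exact_mod_cast hV
  set N : ℝ := (Fintype.card V : ℝ)
  have hdisc : (N - 2) ^ 2 + 4 * (2 * (N - 2)) = N ^ 2 + 4 * N - 12 := by ring
  have hroot := isGreatest_root_sq_eq_mul_add (b := N - 2) (c := 2 * (N - 2)) (by nlinarith)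
  rw [hdisc] at hroot
  have hsqrt : 3 ≤ √(N ^ 2 + 4 * N - 12) := Real.le_sqrt_of_sq_le (by nlinarith)
  refine ⟨mem_spectrum_negEdgeMatrix_of_sq_eq hab (by linarith) hroot.1, fun m hm ↦ ?_⟩
  rcases eq_zero_or_eq_two_or_sq_eq_of_mem_spectrum_negEdgeMatrix hab hm with rfl | rfl | hm
  · linarith
  · linarith
  · exact hroot.2 hm

end NegEdgeMatrix

theorem stmt14_general {V : Type*} [Fintype V] [DecidableEq V] {a b : V} (hab : a ≠ b)
    (hV : 3 ≤ Fintype.card V) (Q : Matrix V V ℝ)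
    (hQdef : ∀ u v, Q u v =
      if u = v then (Fintype.card V : ℝ) - 1
      else if (u = a ∧ v = b) ∨ (u = b ∧ v = a) then -1 else 1)
    (hQ : Q.IsHermitian) :
    maxEig hQ = (3 * (Fintype.card V : ℝ) - 6 +
      √((Fintype.card V : ℝ) ^ 2 + 4 * (Fintype.card V : ℝ) - 12)) / 2 := by
  have hQ_eq : Q = algebraMap ℝ _ ((Fintype.card V : ℝ) - 2) + negEdgeMatrix ℝ a b := by
    ext u v
    rw [hQdef, algebraMap_add_negEdgeMatrix_apply hab]
    congr 1
    ring
  have htop := isGreatest_spectrum_negEdgeMatrix hab hV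
  rw [maxEig_eq_sSup_spectrum, hQ_eq, ← spectrum.singleton_add_eq,
    csSup_add (Set.singleton_nonempty _) bddAbove_singleton htop.nonempty htop.bddAbove,
    csSup_singleton, htop.csSup_eq]
  ring

/-- The largest eigenvalue of the signless Laplacian of the signed complete graph `K_n`
(`n ≥ 4`) with exactly one negative edge (between the first two vertices) equals
`(3n - 6 + √(n² + 4n - 12))/2`. -/
theorem stmt14 (n : ℕ) (hn : 4 ≤ n)
    (Q : Matrix (Fin n) (Fin n) ℝ)
    (hQdef : ∀ u v : Fin n, Q u v =
      if u = v then (n : ℝ) - 1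
      else if (u.val = 0 ∧ v.val = 1) ∨ (u.val = 1 ∧ v.val = 0) then -1 else 1)
    (hQ : Q.IsHermitian) :
    maxEig hQ = (3 * (n : ℝ) - 6 + Real.sqrt ((n : ℝ) ^ 2 + 4 * (n : ℝ) - 12)) / 2 := by
  simpa using stmt14_general (a := (⟨0, by omega⟩ : Fin n)) (b := ⟨1, by omega⟩)
    (by simp) (by rw [Fintype.card_fin]; omega) Q (by simpa [Fin.ext_iff] using hQdef) hQ
end
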